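/- Let d : V → ℕ be valid for c. Let f' : V × V → ℤ satisfy f'(u,v) = −f'(v,u) for all u, v, f'(u,v) ≤ c^R(u,v) for all (u,v) ∈ E^R, and f'(u,v) = 0 for all (u,v) ∉ E^R. Let d' : V → ℕ satisfy d'(v) = d(v) for all v ∉ R, d'(v) ≥ d(v) for all v ∈ R, and suppose d' is valid for the residual region capacity c^R − f' (i.e., d'(t) = 0 and d'(u) ≤ d'(v) + 1 whenever c^R(u,v) − f'(u,v) > 0). Then d' is valid for the global residual capacity c − f'; that is, d'(t) = 0 and d'(u) ≤ d'(v) + 1 whenever c(u,v) − f'(u,v) > 0. -/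

import Mathlib

open Classical

variable {V : Type*}

/-- The boundary of a region `R`: vertices outside `R ∪ {s, t}` connected by an edge
from some vertex of `R`. -/
def boundary (E : Set (V × V)) (R : Set V) (s t : V) : Set V :=
  {w | w ∉ R ∧ w ≠ s ∧ w ≠ t ∧ ∃ u ∈ R, (u, w) ∈ E}

/-- The region edge set
`E^R = (E ∩ ((R∪{s,t}) × (R∪{s,t}))) ∪ (E ∩ (R × B)) ∪ (E ∩ (B × R))`. -/
def regionEdges (E : Set (V × V)) (R : Set V) (s t : V) : Set (V × V) :=
  (E ∩ ((R ∪ {s, t}) ×ˢ (R ∪ {s, t}))) ∪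
    (E ∩ (R ×ˢ boundary E R s t)) ∪ (E ∩ (boundary E R s t ×ˢ R))

/-- The region capacity: `c` on region edges except incoming boundary edges
(which are zeroed), `0` elsewhere. -/
noncomputable def regionCap (E : Set (V × V)) (R : Set V) (s t : V)
    (c : V → V → ℕ) (u v : V) : ℕ :=
  if (u, v) ∈ regionEdges E R s t ∧ ¬(u ∈ boundary E R s t ∧ v ∈ R) then c u v else 0

/-- A labeling `d` is valid for an (integer-valued) capacity `g` with sink `t` if
`d t = 0` and `d u ≤ d v + 1` whenever `g u v > 0`. -/
def ValidFor (t : V) (g : V → V → ℤ) (d : V → ℕ) : Prop :=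
  d t = 0 ∧ ∀ u v : V, 0 < g u v → d u ≤ d v + 1

/-- If `d` is valid for `c`, `f'` is an antisymmetric flow in the region network
(respecting region capacities, zero outside region edges) and `d'` agrees with `d`
outside `R`, dominates `d` on `R`, and is valid for the residual region capacity
`c^R − f'`, then `d'` is valid for the global residual capacity `c − f'`. -/
theorem stmt8 (E : Set (V × V)) (hEsym : ∀ u v : V, (u, v) ∈ E → (v, u) ∈ E)
    (c : V → V → ℕ) (hcE : ∀ u v : V, (u, v) ∉ E → c u v = 0)
    (s t : V) (hst : s ≠ t)
    (R : Set V) (hsR : s ∉ R) (htR : t ∉ R)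
    (d d' : V → ℕ) (f' : V → V → ℤ)
    (hd : ValidFor t (fun u v => (c u v : ℤ)) d)
    (hanti : ∀ u v : V, f' u v = -f' v u)
    (hcap : ∀ u v : V, (u, v) ∈ regionEdges E R s t →
      f' u v ≤ (regionCap E R s t c u v : ℤ))
    (hzero : ∀ u v : V, (u, v) ∉ regionEdges E R s t → f' u v = 0)
    (hd'out : ∀ v ∉ R, d' v = d v)
    (hd'R : ∀ v ∈ R, d v ≤ d' v)
    (hd'valid : ValidFor t (fun u v => (regionCap E R s t c u v : ℤ) - f' u v) d') :
    ValidFor t (fun u v => (c u v : ℤ) - f' u v) d' := by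
  have key : ∀ u v : V, u ∉ R → 0 < c u v → d' u ≤ d' v + 1 := by
    intro u v hu hc
    have h1 := hd.2 u v (Int.natCast_pos.mpr hc)
    have h2 := hd'out u hu
    have h3 : d v ≤ d' v := by
      by_cases hv : v ∈ R
      · exact hd'R v hv
      · exact (hd'out v hv).ge
    omega
  refine ⟨hd'valid.1, fun u v h => ?_⟩
  have hval := hd'valid.2 u v
  simp only at h hval
  by_cases hE : (u, v) ∈ regionEdges E R s t
  · by_cases hB : u ∈ boundary E R s t ∧ v ∈ R
    · have hr : regionCap E R s t c u v = 0 := if_neg (fun h => h.2 hB)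
      have hc := hcap u v hE
      rw [hr] at hc hval
      by_cases hf : f' u v < 0
      · exact hval (by push_cast; omega)
      · exact key u v hB.1.1 (by push_cast at hc; omega)
    · have hr : regionCap E R s t c u v = c u v := if_pos ⟨hE, hB⟩
      rw [hr] at hval
      exact hval h
  · have hf := hzero u v hE
    have hc : 0 < c u v := by omega
    refine key u v (fun hu => hE ?_) hc
    have huv : (u, v) ∈ E := by
      by_contra hn
      have := hcE u v hn
      omega
    by_cases hv : v ∈ R ∪ {s, t}
    · exact Or.inl (Or.inl ⟨huv, Or.inl hu, hv⟩)
    · simp only [Set.mem_union, Set.mem_insert_iff, Set.mem_singleton_iff, not_or] at hv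
      exact Or.inl (Or.inr ⟨huv, hu, hv.1, hv.2.1, hv.2.2, u, hu, huv⟩)
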